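/- Let b = β > 0 and let f : 𝔻 → ℝ be defined by f(r·e^{iθ}) = (1/r)·sin(1/(1−r)^b) for 1/2 ≤ r < 1 and f(r·e^{iθ}) = 1 for 0 ≤ r < 1/2. Then f is bounded on 𝔻 and satisfies the VWMO condition, but f does not belong to VMO¹: there is a constant C > 0 and r₀ ∈ (0,1) such that (1/|D(z,1)|)∫_{D(z,1)} |f(ξ) − f̂₁(z)| dA(ξ) ≥ C for all z ∈ 𝔻 with |z| ≥ r₀. -/

import Mathlib

open MeasureTheory Set

noncomputable section

/-- The normalized area measure on the plane: planar Lebesgue measure divided by `π`. -/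
def dA : Measure ℂ := (ENNReal.ofReal Real.pi)⁻¹ • volume

/-- The open unit disc `𝔻`. -/
def unitDisc : Set ℂ := {z : ℂ | ‖z‖ < 1}

/-- The argument `θ` of `z`, normalized to lie in `[0, 2π)`. -/
def theta (z : ℂ) : ℝ := toIcoMod Real.two_pi_pos 0 (Complex.arg z)

/-- The angle of `ζ`, normalized to lie in `[theta z, theta z + 2π)`;
for `ζ ∈ B(z)` this is the angle `θ̃ ∈ [θ, θ + π(1-r)]` of the paper's convention. -/
def angFrom (z ζ : ℂ) : ℝ := toIcoMod Real.two_pi_pos (theta z) (Complex.arg ζ)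

/-- The polar rectangle `{ρ e^{iφ} : r₁ ≤ ρ ≤ r₂, φ₁ ≤ φ ≤ φ₂}`. -/
def polarRect (r₁ r₂ φ₁ φ₂ : ℝ) : Set ℂ :=
  {w : ℂ | ∃ ρ φ : ℝ, r₁ ≤ ρ ∧ ρ ≤ r₂ ∧ φ₁ ≤ φ ∧ φ ≤ φ₂ ∧
    w = (ρ : ℂ) * Complex.exp ((φ : ℂ) * Complex.I)}

/-- The set `B(z)` for `z = r e^{iθ} ∈ 𝔻`. -/
def Bz (z : ℂ) : Set ℂ :=
  polarRect ‖z‖ (1 - (1 - ‖z‖) / 2) (theta z) (theta z + Real.pi * (1 - ‖z‖))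

/-- The set `B(z, ζ)` for `ζ ∈ B(z)`. -/
def Bzz (z ζ : ℂ) : Set ℂ := polarRect ‖z‖ ‖ζ‖ (theta z) (angFrom z ζ)

/-- The set `B(ζ₁, ζ₂)` for points `ζ₁ ≾ ζ₂` of `B(z)`. -/
def Bsub (z ζ₁ ζ₂ : ℂ) : Set ℂ := polarRect ‖ζ₁‖ ‖ζ₂‖ (angFrom z ζ₁) (angFrom z ζ₂)

/-- The relation `ζ₁ ≾ ζ₂` for points of `B(z)`: `ρ₁ ≤ ρ₂` and `φ₁ ≤ φ₂`. -/
def precSim (z ζ₁ ζ₂ : ℂ) : Prop := ‖ζ₁‖ ≤ ‖ζ₂‖ ∧ angFrom z ζ₁ ≤ angFrom z ζ₂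

/-- The average `f̂_K = (1/|K|) ∫_K f dA` of `f` over a set `K`. -/
def avgOn (f : ℂ → ℂ) (K : Set ℂ) : ℂ := ((dA K).toReal)⁻¹ • ∫ w in K, f w ∂dA

/-- The average function `f̂(z) = f̂_{B(z)}`. -/
def avg (f : ℂ → ℂ) (z : ℂ) : ℂ := avgOn f (Bz z)

/-- The quantity `(1/|B(z)|) |∫_{B(z,ζ)} (f(ξ) - f̂(z)) dA(ξ)|`. -/
def wQuot (f : ℂ → ℂ) (z ζ : ℂ) : ℝ :=
  ((dA (Bz z)).toReal)⁻¹ * ‖∫ ξ in Bzz z ζ, (f ξ - avg f z) ∂dA‖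

/-- The BWMO condition: `‖f‖_BWMO < ∞`. -/
def IsBWMO (f : ℂ → ℂ) : Prop := ∃ C : ℝ, ∀ z ∈ unitDisc, ∀ ζ ∈ Bz z, wQuot f z ζ ≤ C

/-- The BWMO seminorm `‖f‖_BWMO`. -/
def bwmoNorm (f : ℂ → ℂ) : ℝ :=
  sSup {c : ℝ | ∃ z ∈ unitDisc, ∃ ζ ∈ Bz z, c = wQuot f z ζ}

/-- The VWMO condition:
`(1/|B(z)|) sup_{ζ ∈ B(z)} |∫_{B(z,ζ)} (f - f̂(z)) dA| → 0` as `|z| → 1`. -/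
def IsVWMO (f : ℂ → ℂ) : Prop :=
  ∀ ε > (0:ℝ), ∃ r₀ < (1:ℝ), ∀ z ∈ unitDisc, r₀ ≤ ‖z‖ → ∀ ζ ∈ Bz z, wQuot f z ζ ≤ ε

/-- The Bergman-metric disc `D(z,1)` of radius `1` centered at `z`. -/
def Dball (z : ℂ) : Set ℂ :=
  {w : ℂ | ‖w‖ < 1 ∧ ‖(z - w) / (1 - (starRingEnd ℂ) w * z)‖ < Real.tanh 1}

/-- The hyperbolic average `f̂₁(z) = (1/|D(z,1)|) ∫_{D(z,1)} f dA` of a real-valued `f`. -/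
def avg1 (f : ℂ → ℝ) (z : ℂ) : ℝ := ((dA (Dball z)).toReal)⁻¹ * ∫ w in Dball z, f w ∂dA

/-- The mean oscillation `(1/|D(z,1)|) ∫_{D(z,1)} |f - f̂₁(z)| dA` of a real-valued `f`. -/
def meanOsc1 (f : ℂ → ℝ) (z : ℂ) : ℝ :=
  ((dA (Dball z)).toReal)⁻¹ * ∫ ξ in Dball z, |f ξ - avg1 f z| ∂dA

/-- The Berezin transform `f̃(z) = ∫_𝔻 f(w) |k_z(w)|² dA(w)`,
where `k_z(w) = (1-|z|²)/(1-w z̄)²`. -/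
def berezin (f : ℂ → ℂ) (z : ℂ) : ℂ :=
  ∫ w in unitDisc, f w * ((((1 - ‖z‖ ^ 2) ^ 2 / ‖1 - w * (starRingEnd ℂ) z‖ ^ 4 : ℝ)) : ℂ) ∂dA

/-- The example symbol of Section 4:
`f(r e^{iθ}) = (1/(r (1-r)^{b-β})) sin(1/(1-r)^b)` for `r ≥ 1/2`, and `1` for `r < 1/2`. -/
def fEx (b β : ℝ) (z : ℂ) : ℝ :=
  if ‖z‖ < 1 / 2 then 1
  else (1 / (‖z‖ * (1 - ‖z‖) ^ (b - β))) * Real.sin (1 / (1 - ‖z‖) ^ b)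

end

/-!
On a polar rectangle contained in `1/2 ≤ |w| < 1` the Jacobian `ρ` cancels the factor `1/r` of `f`,
so its integral is a multiple of `∫ sin((1-ρ)^{-b}) dρ`. The phase `(1-ρ)^{-b}` has the increasing
derivative `b (1-ρ)^{-b-1}`, hence by the first-derivative test of van der Corput this integral is
`O((1-r)^{b+1})`. Compared with `|B(z)| ≈ (1-|z|)²` this leaves a factor `(1-|z|)^b`, which
tends to `0`: this is VWMO.

The same test applied to `cos(2(1-ρ)^{-b})` shows that `f²` has mean bounded below on a polar
rectangle `Q ⊆ D(z,1)` of size comparable to `1-|z|`, whereas `f` has mean `o(1)` there. Since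
`|f| ≤ 2`, the deviation of `f` from any constant `c ∈ [-2, 2]`, in particular from `f̂₁(z)`, is
then bounded below in `L¹(Q)` by a multiple of `|Q|`, and `|Q| ≈ |D(z,1)|`.
-/

section Oscillation

theorem intervalIntegrable_of_hasDerivAt_of_nonpos {v v' : ℝ → ℝ} {a b : ℝ} (hab : a ≤ b)
    (hv : ∀ x ∈ Icc a b, HasDerivAt v (v' x) x) (hv' : ∀ x ∈ Icc a b, v' x ≤ 0) :
    IntervalIntegrable v' volume a b := by
  have hneg : IntervalIntegrable (-v') volume a b := by
    refine intervalIntegral.intervalIntegrable_deriv_of_nonneg (g := -v) ?_ ?_ ?_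
    · rw [uIcc_of_le hab]
      exact fun x hx => (hv x hx).neg.continuousAt.continuousWithinAt
    · rw [min_eq_left hab, max_eq_right hab]
      exact fun x hx => (hv x (Ioo_subset_Icc_self hx)).neg
    · rw [min_eq_left hab, max_eq_right hab]
      exact fun x hx => neg_nonneg.2 (hv' x (Ioo_subset_Icc_self hx))
  simpa only [neg_neg] using hneg.neg

theorem norm_integral_smul_deriv_le_of_deriv_nonpos {E : Type*} [NormedAddCommGroup E]
    [NormedSpace ℝ E] [CompleteSpace E] {v v' : ℝ → ℝ} {F F' : ℝ → E} {a b C : ℝ} (hab : a ≤ b)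
    (hv : ∀ x ∈ Icc a b, HasDerivAt v (v' x) x) (hF : ∀ x ∈ Icc a b, HasDerivAt F (F' x) x)
    (hF' : IntervalIntegrable F' volume a b) (hv' : ∀ x ∈ Icc a b, v' x ≤ 0)
    (hv_b : 0 ≤ v b) (hFC : ∀ x ∈ Icc a b, ‖F x‖ ≤ C) :
    ‖∫ x in a..b, v x • F' x‖ ≤ 2 * C * v a := by
  have hv'_int := intervalIntegrable_of_hasDerivAt_of_nonpos hab hv hv'
  have hv'_integral : ∫ x in a..b, v' x = v b - v a :=
    intervalIntegral.integral_eq_sub_of_hasDerivAt (by rwa [uIcc_of_le hab]) hv'_int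
  have hremainder : ‖∫ x in a..b, v' x • F x‖ ≤ C * (v a - v b) := by
    have hbound : ∀ x ∈ Ioc a b, ‖v' x • F x‖ ≤ C * -v' x := fun x hx => by
      rw [norm_smul, Real.norm_of_nonpos (hv' x (Ioc_subset_Icc_self hx)), mul_comm]
      exact mul_le_mul_of_nonneg_right (hFC x (Ioc_subset_Icc_self hx))
        (neg_nonneg.2 (hv' x (Ioc_subset_Icc_self hx)))
    calc ‖∫ x in a..b, v' x • F x‖ ≤ ∫ x in a..b, C * -v' x :=
          intervalIntegral.norm_integral_le_of_norm_le hab (.of_forall hbound)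
            (hv'_int.neg.const_mul C)
      _ = C * (v a - v b) := by
          rw [intervalIntegral.integral_const_mul, intervalIntegral.integral_neg, hv'_integral,
            neg_sub]
  have hv_a : 0 ≤ v a := by
    have : ∫ x in a..b, v' x ≤ 0 := by
      simpa using intervalIntegral.integral_mono_on hab hv'_int (by simp) hv'
    linarith
  rw [intervalIntegral.integral_smul_deriv_eq_deriv_smul (by rwa [uIcc_of_le hab])
    (by rwa [uIcc_of_le hab]) hv'_int hF']
  calc ‖v b • F b - v a • F a - ∫ x in a..b, v' x • F x‖
      ≤ ‖v b • F b‖ + ‖v a • F a‖ + ‖∫ x in a..b, v' x • F x‖ :=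
        (norm_sub_le _ _).trans (add_le_add_left (norm_sub_le _ _) _)
    _ ≤ v b * C + v a * C + C * (v a - v b) := by
        rw [norm_smul, norm_smul, Real.norm_of_nonneg hv_a, Real.norm_of_nonneg hv_b]
        gcongr
        exacts [hFC b (right_mem_Icc.2 hab), hFC a (left_mem_Icc.2 hab)]
    _ = 2 * C * v a := by ring

-- `exp (i u) = (u')⁻¹ · (exp (i u))' / i`, with monotone amplitude `(u')⁻¹`.
theorem norm_integral_exp_mul_I_le_two_div {u u' u'' : ℝ → ℝ} {a b : ℝ} (hab : a ≤ b)
    (hu : ∀ x ∈ Icc a b, HasDerivAt u (u' x) x) (hu' : ∀ x ∈ Icc a b, HasDerivAt u' (u'' x) x)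
    (hu'_pos : ∀ x ∈ Icc a b, 0 < u' x) (hu''_nonneg : ∀ x ∈ Icc a b, 0 ≤ u'' x) :
    ‖∫ x in a..b, Complex.exp (u x * Complex.I)‖ ≤ 2 / u' a := by
  let F : ℝ → ℂ := fun x => Complex.exp (u x * Complex.I)
  let F' : ℝ → ℂ := fun x => F x * (u' x * Complex.I)
  have hF : ∀ x ∈ Icc a b, HasDerivAt F (F' x) x := fun x hx =>
    ((hu x hx).ofReal_comp.mul_const Complex.I).cexp
  have hF' : IntervalIntegrable F' volume a b := by
    have hF_cont : ContinuousOn F (Icc a b) := HasDerivAt.continuousOn hF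
    have hu'_cont : ContinuousOn u' (Icc a b) := HasDerivAt.continuousOn hu'
    refine ContinuousOn.intervalIntegrable_of_Icc hab ?_
    fun_prop
  have hamplitude : ∫ x in a..b, (u' x)⁻¹ • F' x = (∫ x in a..b, F x) * Complex.I := by
    rw [← intervalIntegral.integral_mul_const]
    refine intervalIntegral.integral_congr fun x hx => ?_
    have : (u' x : ℂ) ≠ 0 := mod_cast (hu'_pos x (by rwa [uIcc_of_le hab] at hx)).ne'
    simp only [F', Complex.real_smul, Complex.ofReal_inv]
    field_simp
  calc ‖∫ x in a..b, F x‖ = ‖∫ x in a..b, (u' x)⁻¹ • F' x‖ := by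
        rw [hamplitude, norm_mul, Complex.norm_I, mul_one]
    _ ≤ 2 * 1 * (u' a)⁻¹ :=
        norm_integral_smul_deriv_le_of_deriv_nonpos hab
          (fun x hx => (hu' x hx).inv (hu'_pos x hx).ne') hF hF'
          (fun x hx => div_nonpos_of_nonpos_of_nonneg
            (neg_nonpos.2 (hu''_nonneg x hx)) (sq_nonneg _))
          (inv_nonneg.2 (hu'_pos b (right_mem_Icc.2 hab)).le)
          (fun x _ => (Complex.norm_exp_ofReal_mul_I (u x)).le)
    _ = 2 / u' a := by rw [mul_one, div_eq_mul_inv]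

theorem hasDerivAt_one_sub_rpow {x : ℝ} (hx : x < 1) (p : ℝ) :
    HasDerivAt (fun y : ℝ => (1 - y) ^ p) (-p * (1 - x) ^ (p - 1)) x := by
  simpa using ((hasDerivAt_id x).const_sub 1).rpow_const (p := p) (.inl (sub_pos.2 hx).ne')

variable {b k r₁ r₂ : ℝ}

theorem norm_integral_exp_one_sub_rpow_le (hb : 0 < b) (hk : 0 < k) (h₁₂ : r₁ ≤ r₂)
    (hr₂ : r₂ < 1) :
    ‖∫ ρ in r₁..r₂, Complex.exp ((k * (1 - ρ) ^ (-b) : ℝ) * Complex.I)‖ ≤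
      2 / (k * b) * (1 - r₁) ^ (b + 1) := by
  have hpos : ∀ x ∈ Icc r₁ r₂, 0 < 1 - x := fun x hx => by linarith [hx.2]
  have hmain := norm_integral_exp_mul_I_le_two_div h₁₂
    (u' := fun x => k * (- -b * (1 - x) ^ (-b - 1)))
    (u'' := fun x => k * (- -b * (-(-b - 1) * (1 - x) ^ (-b - 1 - 1))))
    (fun x hx => (hasDerivAt_one_sub_rpow (sub_pos.1 (hpos x hx)) (-b)).const_mul k)
    (fun x hx =>
      ((hasDerivAt_one_sub_rpow (sub_pos.1 (hpos x hx)) (-b - 1)).const_mul _).const_mul k)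
    (fun x hx => by have := hpos x hx; rw [neg_neg]; positivity)
    (fun x hx => by
      have := hpos x hx
      rw [neg_neg, neg_sub, sub_neg_eq_add]; positivity)
  refine hmain.trans_eq ?_
  have hr₁ : 0 ≤ 1 - r₁ := (hpos r₁ (left_mem_Icc.2 h₁₂)).le
  rw [neg_neg, ← neg_add', Real.rpow_neg hr₁, ← mul_assoc, div_mul_eq_div_div, div_inv_eq_mul]

theorem continuousOn_one_sub_rpow (hr₂ : r₂ < 1) (p : ℝ) :
    ContinuousOn (fun ρ : ℝ => (1 - ρ) ^ p) (Icc r₁ r₂) :=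
  HasDerivAt.continuousOn fun _ hx => hasDerivAt_one_sub_rpow (hx.2.trans_lt hr₂) p

theorem intervalIntegrable_exp_one_sub_rpow (h₁₂ : r₁ ≤ r₂) (hr₂ : r₂ < 1) (k b : ℝ) :
    IntervalIntegrable (fun ρ : ℝ => Complex.exp ((k * (1 - ρ) ^ (-b) : ℝ) * Complex.I))
      volume r₁ r₂ := by
  have hcont := continuousOn_one_sub_rpow (r₁ := r₁) hr₂ (-b)
  exact ContinuousOn.intervalIntegrable_of_Icc h₁₂ (by fun_prop)

theorem abs_integral_sin_one_sub_rpow_le (hb : 0 < b) (hk : 0 < k) (h₁₂ : r₁ ≤ r₂)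
    (hr₂ : r₂ < 1) :
    |∫ ρ in r₁..r₂, Real.sin (k * (1 - ρ) ^ (-b))| ≤ 2 / (k * b) * (1 - r₁) ^ (b + 1) := by
  have him := Complex.imCLM.intervalIntegral_comp_comm
    (intervalIntegrable_exp_one_sub_rpow h₁₂ hr₂ k b)
  simp only [Complex.imCLM_apply, Complex.exp_ofReal_mul_I_im] at him
  rw [him]
  exact (Complex.abs_im_le_norm _).trans (norm_integral_exp_one_sub_rpow_le hb hk h₁₂ hr₂)

theorem abs_integral_cos_one_sub_rpow_le (hb : 0 < b) (hk : 0 < k) (h₁₂ : r₁ ≤ r₂)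
    (hr₂ : r₂ < 1) :
    |∫ ρ in r₁..r₂, Real.cos (k * (1 - ρ) ^ (-b))| ≤ 2 / (k * b) * (1 - r₁) ^ (b + 1) := by
  have hre := Complex.reCLM.intervalIntegral_comp_comm
    (intervalIntegrable_exp_one_sub_rpow h₁₂ hr₂ k b)
  simp only [Complex.reCLM_apply, Complex.exp_ofReal_mul_I_re] at hre
  rw [hre]
  exact (Complex.abs_re_le_norm _).trans (norm_integral_exp_one_sub_rpow_le hb hk h₁₂ hr₂)

theorem integral_sin_sq_one_sub_rpow_ge (hb : 0 < b) (h₁₂ : r₁ ≤ r₂) (hr₂ : r₂ < 1) :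
    (r₂ - r₁) / 2 - (1 - r₁) ^ (b + 1) / (2 * b) ≤
      ∫ ρ in r₁..r₂, Real.sin ((1 - ρ) ^ (-b)) ^ 2 := by
  have hcos := abs_integral_cos_one_sub_rpow_le hb two_pos h₁₂ hr₂
  have hcos_int : IntervalIntegrable (fun ρ : ℝ => Real.cos (2 * (1 - ρ) ^ (-b)))
      volume r₁ r₂ := by
    have hcont := continuousOn_one_sub_rpow (r₁ := r₁) hr₂ (-b)
    exact ContinuousOn.intervalIntegrable_of_Icc h₁₂ (by fun_prop)
  calc (r₂ - r₁) / 2 - (1 - r₁) ^ (b + 1) / (2 * b)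
      = (r₂ - r₁) / 2 - 2 / (2 * b) * (1 - r₁) ^ (b + 1) / 2 := by ring
    _ ≤ (r₂ - r₁) / 2 - (∫ ρ in r₁..r₂, Real.cos (2 * (1 - ρ) ^ (-b))) / 2 := by
        gcongr
        exact (le_abs_self _).trans hcos
    _ = ∫ ρ in r₁..r₂, Real.sin ((1 - ρ) ^ (-b)) ^ 2 := by
        simp only [Real.sin_sq_eq_half_sub]
        rw [intervalIntegral.integral_sub (by simp) (hcos_int.div_const 2),
          intervalIntegral.integral_const, intervalIntegral.integral_div, smul_eq_mul]
        ring

end Oscillation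

section PolarRectangles

variable {E : Type*} [NormedAddCommGroup E] [NormedSpace ℝ E] {r₁ r₂ φ₁ φ₂ : ℝ}

theorem polarRect_eq_image (r₁ r₂ φ₁ φ₂ : ℝ) :
    polarRect r₁ r₂ φ₁ φ₂ = Complex.polarCoord.symm '' (Icc r₁ r₂ ×ˢ Icc φ₁ φ₂) := by
  ext w
  simp only [polarRect, Complex.polarCoord_symm_apply, Complex.exp_mul_I, mem_ofPred_eq, mem_image,
    mem_prod, mem_Icc, Prod.exists, and_assoc, eq_comm (a := w), Complex.ofReal_cos,
    Complex.ofReal_sin]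

theorem isCompact_polarRect (r₁ r₂ φ₁ φ₂ : ℝ) : IsCompact (polarRect r₁ r₂ φ₁ φ₂) := by
  have hcont : Continuous Complex.polarCoord.symm := by
    simp only [funext Complex.polarCoord_symm_apply]
    fun_prop
  rw [polarRect_eq_image]
  exact (isCompact_Icc.prod isCompact_Icc).image hcont

theorem norm_mem_Icc_of_mem_polarRect (hr₁ : 0 ≤ r₁) {w : ℂ} (hw : w ∈ polarRect r₁ r₂ φ₁ φ₂) :
    ‖w‖ ∈ Icc r₁ r₂ := by
  obtain ⟨ρ, φ, h₁, h₂, -, -, rfl⟩ := hw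
  rw [norm_mul, Complex.norm_exp_ofReal_mul_I, mul_one, Complex.norm_of_nonneg (hr₁.trans h₁)]
  exact ⟨h₁, h₂⟩

theorem injOn_polarCoord_symm (hr₁ : 0 < r₁) (hφ : φ₂ - φ₁ < 2 * Real.pi) :
    InjOn polarCoord.symm (Icc r₁ r₂ ×ˢ Icc φ₁ φ₂) := by
  rintro ⟨ρ, φ⟩ ⟨hρ, hφmem⟩ ⟨ρ', φ'⟩ ⟨hρ', hφ'mem⟩ h
  simp only [polarCoord_symm_apply, Prod.mk.injEq] at h
  obtain ⟨hcos, hsin⟩ := h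
  have hρ_pos : 0 < ρ := hr₁.trans_le hρ.1
  have hρ'_pos : 0 < ρ' := hr₁.trans_le hρ'.1
  have hsq : ρ ^ 2 = ρ' ^ 2 := by
    calc ρ ^ 2 = (ρ * Real.cos φ) ^ 2 + (ρ * Real.sin φ) ^ 2 := by
          rw [mul_pow, mul_pow, ← mul_add, Real.cos_sq_add_sin_sq, mul_one]
      _ = ρ' ^ 2 := by
          rw [hcos, hsin, mul_pow, mul_pow, ← mul_add, Real.cos_sq_add_sin_sq, mul_one]
  obtain rfl : ρ = ρ' := (sq_eq_sq₀ hρ_pos.le hρ'_pos.le).1 hsq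
  have hangle : (φ : Real.Angle) = φ' :=
    Real.Angle.cos_sin_inj (mul_left_cancel₀ hρ_pos.ne' hcos) (mul_left_cancel₀ hρ_pos.ne' hsin)
  have hIco : ∀ ψ ∈ Icc φ₁ φ₂, ψ ∈ Ico φ₁ (φ₁ + 2 * Real.pi) := fun ψ hψ =>
    ⟨hψ.1, by linarith [hψ.2]⟩
  have : Fact (0 < 2 * Real.pi) := ⟨Real.two_pi_pos⟩
  rw [(AddCircle.coe_eq_coe_iff_of_mem_Ico (hIco φ hφmem) (hIco φ' hφ'mem)).1 hangle]

theorem setIntegral_polarRect (hr₁ : 0 < r₁) (hφ : φ₂ - φ₁ < 2 * Real.pi) (f : ℂ → E) :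
    ∫ w in polarRect r₁ r₂ φ₁ φ₂, f w =
      ∫ p in Icc r₁ r₂ ×ˢ Icc φ₁ φ₂, p.1 • f (Complex.polarCoord.symm p) := by
  have hmeas : MeasurableSet (Icc r₁ r₂ ×ˢ Icc φ₁ φ₂) := measurableSet_Icc.prod measurableSet_Icc
  have hpre : Complex.measurableEquivRealProd.symm ⁻¹' polarRect r₁ r₂ φ₁ φ₂ =
      polarCoord.symm '' (Icc r₁ r₂ ×ˢ Icc φ₁ φ₂) := by
    rw [polarRect_eq_image, ← MeasurableEquiv.image_eq_preimage_symm, image_image]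
    rfl
  rw [← Complex.volume_preserving_equiv_real_prod.symm.setIntegral_preimage_emb
      (MeasurableEquiv.measurableEmbedding _), hpre,
    integral_image_eq_integral_abs_det_fderiv_smul volume hmeas
      (fun p _ => (hasFDerivAt_polarCoord_symm p).hasFDerivWithinAt)
      (injOn_polarCoord_symm hr₁ hφ)]
  refine setIntegral_congr_fun hmeas fun p hp => ?_
  simp only [det_fderivPolarCoordSymm, abs_of_pos (hr₁.trans_le hp.1.1),
    Complex.measurableEquivRealProd_symm_polarCoord_symm_apply]

theorem setIntegral_polarRect_comp_norm (hr₁ : 0 < r₁) (h₁₂ : r₁ ≤ r₂) (hφ₁₂ : φ₁ ≤ φ₂)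
    (hφ : φ₂ - φ₁ < 2 * Real.pi) (g : ℝ → E) :
    ∫ w in polarRect r₁ r₂ φ₁ φ₂, g ‖w‖ = (φ₂ - φ₁) • ∫ ρ in r₁..r₂, ρ • g ρ := by
  have hmeas : MeasurableSet (Icc r₁ r₂ ×ˢ Icc φ₁ φ₂) := measurableSet_Icc.prod measurableSet_Icc
  have hnorm : ∀ p ∈ Icc r₁ r₂ ×ˢ Icc φ₁ φ₂,
      p.1 • g ‖Complex.polarCoord.symm p‖ = p.1 • g p.1 := fun p hp => by
    rw [Complex.norm_polarCoord_symm, abs_of_pos (hr₁.trans_le hp.1.1)]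
  rw [setIntegral_polarRect hr₁ hφ (fun w => g ‖w‖), setIntegral_congr_fun hmeas hnorm,
    Measure.volume_eq_prod, ← Measure.prod_restrict, integral_fun_fst (fun ρ => ρ • g ρ),
    measureReal_restrict_apply_univ, Real.volume_real_Icc_of_le hφ₁₂, integral_Icc_eq_integral_Ioc,
    intervalIntegral.integral_of_le h₁₂]

theorem setIntegral_dA (s : Set ℂ) (f : ℂ → E) :
    ∫ w in s, f w ∂dA = Real.pi⁻¹ • ∫ w in s, f w := by
  rw [dA, Measure.restrict_smul, integral_smul_measure, ENNReal.toReal_inv,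
    ENNReal.toReal_ofReal Real.pi_pos.le]

theorem setIntegral_polarRect_comp_norm_dA (hr₁ : 0 < r₁) (h₁₂ : r₁ ≤ r₂) (hφ₁₂ : φ₁ ≤ φ₂)
    (hφ : φ₂ - φ₁ < 2 * Real.pi) (g : ℝ → E) :
    ∫ w in polarRect r₁ r₂ φ₁ φ₂, g ‖w‖ ∂dA =
      ((φ₂ - φ₁) / Real.pi) • ∫ ρ in r₁..r₂, ρ • g ρ := by
  rw [setIntegral_dA, setIntegral_polarRect_comp_norm hr₁ h₁₂ hφ₁₂ hφ, smul_smul,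
    inv_mul_eq_div]

theorem dA_real_polarRect (hr₁ : 0 < r₁) (h₁₂ : r₁ ≤ r₂) (hφ₁₂ : φ₁ ≤ φ₂)
    (hφ : φ₂ - φ₁ < 2 * Real.pi) :
    dA.real (polarRect r₁ r₂ φ₁ φ₂) = (φ₂ - φ₁) / Real.pi * ((r₂ ^ 2 - r₁ ^ 2) / 2) := by
  simpa using setIntegral_polarRect_comp_norm_dA hr₁ h₁₂ hφ₁₂ hφ (fun _ => (1 : ℝ))

instance : IsFiniteMeasureOnCompacts dA :=
  IsFiniteMeasureOnCompacts.smul volume (by simp [Real.pi_pos])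

theorem dA_real_ball (c : ℂ) {R : ℝ} (hR : 0 ≤ R) : dA.real (Metric.ball c R) = R ^ 2 := by
  rw [dA, measureReal_ennreal_smul_apply, Measure.real, Complex.volume_ball]
  simp [ENNReal.toReal_ofReal hR, Real.pi_pos.le, field]

theorem polarRect_subset_closedBall (hr₁ : 0 ≤ r₁) :
    polarRect r₁ r₂ φ₁ φ₂ ⊆ Metric.closedBall (r₁ * Complex.exp (φ₁ * Complex.I))
      (r₂ - r₁ + r₁ * (φ₂ - φ₁)) := by
  rintro _ ⟨ρ, φ, hρ₁, hρ₂, hφ₁, hφ₂, rfl⟩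
  have hangular : ‖Complex.exp (φ * Complex.I) - Complex.exp (φ₁ * Complex.I)‖ ≤ φ - φ₁ := by
    have hfactor : Complex.exp (φ * Complex.I) - Complex.exp (φ₁ * Complex.I) =
        Complex.exp (φ₁ * Complex.I) * (Complex.exp (Complex.I * (φ - φ₁ : ℝ)) - 1) := by
      rw [mul_sub, ← Complex.exp_add, mul_one]
      push_cast
      ring_nf
    rw [hfactor, norm_mul, Complex.norm_exp_ofReal_mul_I, one_mul]
    exact Real.norm_exp_I_mul_ofReal_sub_one_le.trans_eq (Real.norm_of_nonneg (sub_nonneg.2 hφ₁))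
  rw [mem_closedBall_iff_norm]
  calc ‖(ρ * Complex.exp (φ * Complex.I) - r₁ * Complex.exp (φ₁ * Complex.I) : ℂ)‖
      = ‖((ρ - r₁ : ℝ) * Complex.exp (φ * Complex.I) +
          r₁ * (Complex.exp (φ * Complex.I) - Complex.exp (φ₁ * Complex.I)) : ℂ)‖ := by
        push_cast
        ring_nf
    _ ≤ (ρ - r₁) + r₁ * (φ - φ₁) := by
        refine (norm_add_le _ _).trans ?_
        rw [norm_mul, norm_mul, Complex.norm_exp_ofReal_mul_I, mul_one,
          Complex.norm_of_nonneg (sub_nonneg.2 hρ₁), Complex.norm_of_nonneg hr₁]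
        gcongr
    _ ≤ r₂ - r₁ + r₁ * (φ₂ - φ₁) := by gcongr

end PolarRectangles

section ExampleSymbol

variable {b r₁ r₂ φ₁ φ₂ : ℝ}

theorem fEx_of_half_le {z : ℂ} (hz : 1 / 2 ≤ ‖z‖) (hz₁ : ‖z‖ < 1) :
    fEx b b z = Real.sin ((1 - ‖z‖) ^ (-b)) / ‖z‖ := by
  rw [fEx, if_neg hz.not_gt, sub_self, Real.rpow_zero, mul_one, one_div, one_div,
    Real.rpow_neg (sub_nonneg.2 hz₁.le), inv_mul_eq_div]

theorem abs_fEx_le_two (b : ℝ) (z : ℂ) : |fEx b b z| ≤ 2 := by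
  rw [fEx, sub_self, Real.rpow_zero, mul_one]
  split_ifs with hz
  · norm_num
  · have hz' : 1 / 2 ≤ ‖z‖ := not_lt.1 hz
    calc |1 / ‖z‖ * Real.sin (1 / (1 - ‖z‖) ^ b)|
        = 1 / ‖z‖ * |Real.sin (1 / (1 - ‖z‖) ^ b)| := by
          rw [abs_mul, abs_of_nonneg (by positivity)]
      _ ≤ 1 / (1 / 2) * 1 := by
          gcongr
          exact Real.abs_sin_le_one _
      _ = 2 := by norm_num

theorem measurable_fEx (b β : ℝ) : Measurable (fEx b β) :=
  Measurable.ite (measurableSet_lt measurable_norm measurable_const) measurable_const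
    (by fun_prop)

theorem integrableOn_fEx (b : ℝ) {s : Set ℂ} (hs : Bornology.IsBounded s) :
    IntegrableOn (fEx b b) s dA :=
  Measure.integrableOn_of_bounded hs.measure_lt_top.ne
    (measurable_fEx b b).aestronglyMeasurable (.of_forall (abs_fEx_le_two b))

theorem setIntegral_polarRect_comp_fEx {E : Type*} [NormedAddCommGroup E] [NormedSpace ℝ E]
    (hr₁ : 1 / 2 ≤ r₁) (h₁₂ : r₁ ≤ r₂) (hr₂ : r₂ < 1) (hφ₁₂ : φ₁ ≤ φ₂)
    (hφ : φ₂ - φ₁ < 2 * Real.pi) (g : ℝ → E) :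
    ∫ w in polarRect r₁ r₂ φ₁ φ₂, g (fEx b b w) ∂dA =
      ((φ₂ - φ₁) / Real.pi) • ∫ ρ in r₁..r₂, ρ • g (Real.sin ((1 - ρ) ^ (-b)) / ρ) := by
  rw [← setIntegral_polarRect_comp_norm_dA (by linarith) h₁₂ hφ₁₂ hφ]
  refine setIntegral_congr_fun (isCompact_polarRect ..).measurableSet fun w hw => ?_
  obtain ⟨h₁, h₂⟩ := norm_mem_Icc_of_mem_polarRect (by linarith) hw
  rw [fEx_of_half_le (hr₁.trans h₁) (h₂.trans_lt hr₂)]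

theorem abs_setIntegral_fEx_polarRect_le (hb : 0 < b) (hr₁ : 1 / 2 ≤ r₁) (h₁₂ : r₁ ≤ r₂)
    (hr₂ : r₂ < 1) (hφ₁₂ : φ₁ ≤ φ₂) (hφ : φ₂ - φ₁ < 2 * Real.pi) :
    |∫ w in polarRect r₁ r₂ φ₁ φ₂, fEx b b w ∂dA| ≤
      (φ₂ - φ₁) / Real.pi * (2 / b * (1 - r₁) ^ (b + 1)) := by
  have hjacobian : ∫ ρ in r₁..r₂, ρ • (Real.sin ((1 - ρ) ^ (-b)) / ρ) =
      ∫ ρ in r₁..r₂, Real.sin (1 * (1 - ρ) ^ (-b)) := by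
    refine intervalIntegral.integral_congr fun ρ hρ => ?_
    rw [uIcc_of_le h₁₂] at hρ
    have hρ_ne : ρ ≠ 0 := by linarith [hρ.1]
    simp only [smul_eq_mul, mul_div_cancel₀ _ hρ_ne, one_mul]
  have hangle : 0 ≤ (φ₂ - φ₁) / Real.pi := div_nonneg (sub_nonneg.2 hφ₁₂) Real.pi_pos.le
  rw [setIntegral_polarRect_comp_fEx hr₁ h₁₂ hr₂ hφ₁₂ hφ (fun x => x), hjacobian, smul_eq_mul,
    abs_mul, abs_of_nonneg hangle]
  gcongr
  simpa only [one_mul] using abs_integral_sin_one_sub_rpow_le hb one_pos h₁₂ hr₂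

theorem setIntegral_sq_fEx_polarRect_ge (hb : 0 < b) (hr₁ : 1 / 2 ≤ r₁) (h₁₂ : r₁ ≤ r₂)
    (hr₂ : r₂ < 1) (hφ₁₂ : φ₁ ≤ φ₂) (hφ : φ₂ - φ₁ < 2 * Real.pi) :
    (φ₂ - φ₁) / Real.pi * ((r₂ - r₁) / 2 - (1 - r₁) ^ (b + 1) / (2 * b)) ≤
      ∫ w in polarRect r₁ r₂ φ₁ φ₂, fEx b b w ^ 2 ∂dA := by
  have hρ_pos : ∀ ρ ∈ Icc r₁ r₂, 0 < ρ := fun ρ hρ => by linarith [hρ.1]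
  have hsin : ContinuousOn (fun ρ : ℝ => Real.sin ((1 - ρ) ^ (-b))) (Icc r₁ r₂) :=
    Real.continuous_sin.comp_continuousOn (continuousOn_one_sub_rpow hr₂ (-b))
  have hangle : 0 ≤ (φ₂ - φ₁) / Real.pi := div_nonneg (sub_nonneg.2 hφ₁₂) Real.pi_pos.le
  rw [setIntegral_polarRect_comp_fEx hr₁ h₁₂ hr₂ hφ₁₂ hφ (fun x => x ^ 2), smul_eq_mul]
  refine mul_le_mul_of_nonneg_left ?_ hangle
  refine (integral_sin_sq_one_sub_rpow_ge hb h₁₂ hr₂).trans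
    (intervalIntegral.integral_mono_on h₁₂ ?_ ?_ fun ρ hρ => ?_)
  · exact (hsin.pow 2).intervalIntegrable_of_Icc h₁₂
  · exact (continuousOn_id.smul ((hsin.div continuousOn_id fun ρ hρ => (hρ_pos ρ hρ).ne').pow
      2)).intervalIntegrable_of_Icc h₁₂
  · have hρ0 := hρ_pos ρ hρ
    calc Real.sin ((1 - ρ) ^ (-b)) ^ 2 ≤ Real.sin ((1 - ρ) ^ (-b)) ^ 2 / ρ :=
          le_div_self (sq_nonneg _) hρ0 (hρ.2.trans hr₂.le)
      _ = ρ • (Real.sin ((1 - ρ) ^ (-b)) / ρ) ^ 2 := by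
          rw [smul_eq_mul]
          field_simp

end ExampleSymbol

section WeakOscillation

variable {b : ℝ} {z ζ : ℂ}

theorem norm_setIntegral_sub_avgOn_le {f : ℂ → ℂ} {K L : Set ℂ} (hLK : L ⊆ K) (hK : dA K ≠ ⊤)
    (hf : IntegrableOn f K dA) :
    ‖∫ w in L, (f w - avgOn f K) ∂dA‖ ≤ ‖∫ w in L, f w ∂dA‖ + ‖∫ w in K, f w ∂dA‖ := by
  have hmass : dA.real L * (dA.real K)⁻¹ ≤ 1 := by
    rw [← div_eq_mul_inv]
    exact div_le_one_of_le₀ (measureReal_mono hLK hK) measureReal_nonneg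
  rw [integral_sub (hf.mono_set hLK) (integrableOn_const (measure_ne_top_of_subset hLK hK)),
    setIntegral_const]
  refine (norm_sub_le _ _).trans (add_le_add_right ?_ _)
  calc ‖dA.real L • avgOn f K‖ = dA.real L * (dA.real K)⁻¹ * ‖∫ w in K, f w ∂dA‖ := by
        rw [avgOn, ← Measure.real, smul_smul, norm_smul,
          Real.norm_of_nonneg (mul_nonneg measureReal_nonneg (inv_nonneg.2 measureReal_nonneg))]
    _ ≤ ‖∫ w in K, f w ∂dA‖ := mul_le_of_le_one_left (norm_nonneg _) hmass

theorem angFrom_polar (z : ℂ) {ρ φ : ℝ} (hρ : 0 < ρ) (hφ₀ : theta z ≤ φ)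
    (hφ₁ : φ < theta z + 2 * Real.pi) : angFrom z (ρ * Complex.exp (φ * Complex.I)) = φ := by
  rw [angFrom, toIcoMod_eq_iff]
  refine ⟨⟨hφ₀, hφ₁⟩, ⌊(Real.pi - φ) / (2 * Real.pi)⌋, ?_⟩
  have harg := Complex.arg_mul_cos_add_sin_mul_I_sub hρ φ
  rw [Complex.exp_mul_I, zsmul_eq_mul]
  linarith

theorem norm_mem_Icc_of_mem_Bz (hζ : ζ ∈ Bz z) :
    ‖ζ‖ ∈ Icc ‖z‖ (1 - (1 - ‖z‖) / 2) :=
  norm_mem_Icc_of_mem_polarRect (norm_nonneg z) hζ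

theorem angFrom_mem_Icc_of_mem_Bz (hz : 0 < ‖z‖) (hζ : ζ ∈ Bz z) :
    angFrom z ζ ∈ Icc (theta z) (theta z + Real.pi * (1 - ‖z‖)) := by
  obtain ⟨ρ, φ, hρ, -, hφ₀, hφ₁, rfl⟩ := hζ
  rw [angFrom_polar z (hz.trans_le hρ) hφ₀ (by nlinarith [Real.pi_pos])]
  exact ⟨hφ₀, hφ₁⟩

theorem Bzz_subset_Bz (hz : 0 < ‖z‖) (hζ : ζ ∈ Bz z) : Bzz z ζ ⊆ Bz z := by
  rintro w ⟨ρ, φ, hρ₁, hρ₂, hφ₁, hφ₂, hw⟩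
  exact ⟨ρ, φ, hρ₁, hρ₂.trans (norm_mem_Icc_of_mem_Bz hζ).2, hφ₁,
    hφ₂.trans (angFrom_mem_Icc_of_mem_Bz hz hζ).2, hw⟩

theorem dA_real_Bz (hz : 0 < ‖z‖) (hz₁ : ‖z‖ < 1) :
    dA.real (Bz z) = (1 - ‖z‖) ^ 2 * (1 + 3 * ‖z‖) / 8 := by
  have hπ := Real.pi_pos
  rw [Bz, dA_real_polarRect hz (by linarith) (by nlinarith) (by nlinarith)]
  field_simp
  ring

theorem wQuot_le {f : ℂ → ℂ} (hz : 0 < ‖z‖) (hζ : ζ ∈ Bz z)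
    (hf : IntegrableOn f (Bz z) dA) :
    wQuot f z ζ ≤
      (‖∫ w in Bzz z ζ, f w ∂dA‖ + ‖∫ w in Bz z, f w ∂dA‖) / dA.real (Bz z) := by
  rw [wQuot, ← Measure.real, inv_mul_eq_div, avg]
  exact div_le_div_of_nonneg_right (norm_setIntegral_sub_avgOn_le (Bzz_subset_Bz hz hζ)
    (isCompact_polarRect ..).measure_lt_top.ne hf) measureReal_nonneg

theorem isVWMO_of_tendsto {f : ℂ → ℂ} {g : ℝ → ℝ} {r₁ : ℝ} (hr₁ : r₁ < 1)
    (hg : Filter.Tendsto g (nhdsWithin 1 (Iio 1)) (nhds 0))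
    (hfg : ∀ z ∈ unitDisc, r₁ ≤ ‖z‖ → ∀ ζ ∈ Bz z, wQuot f z ζ ≤ g ‖z‖) : IsVWMO f := by
  intro ε hε
  obtain ⟨r₂, hr₂, hgε⟩ := mem_nhdsLT_iff_exists_Ico_subset.1 (hg.eventually_le_const hε)
  exact ⟨max r₁ r₂, max_lt hr₁ hr₂, fun z hz hr ζ hζ =>
    (hfg z hz ((le_max_left _ _).trans hr) ζ hζ).trans (hgε ⟨(le_max_right _ _).trans hr, hz⟩)⟩

theorem tendsto_one_sub_rpow {p : ℝ} (hp : 0 < p) :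
    Filter.Tendsto (fun r : ℝ => (1 - r) ^ p) (nhdsWithin 1 (Iio 1)) (nhds 0) := by
  have hcont : Continuous fun r : ℝ => (1 - r) ^ p :=
    (continuous_const.sub continuous_id).rpow_const fun _ => .inr hp.le
  simpa only [sub_self, Real.zero_rpow hp.ne'] using
    (hcont.tendsto 1).mono_left (nhdsWithin_le_nhds (s := Iio 1))

theorem norm_setIntegral_fEx_polarRect_le {r₁ r₂ φ₁ φ₂ : ℝ} (hb : 0 < b) (hr₁ : 1 / 2 ≤ r₁)
    (h₁₂ : r₁ ≤ r₂) (hr₂ : r₂ < 1) (hφ₁₂ : φ₁ ≤ φ₂) (hφ : φ₂ ≤ φ₁ + Real.pi * (1 - r₁)) :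
    ‖∫ w in polarRect r₁ r₂ φ₁ φ₂, (fEx b b w : ℂ) ∂dA‖ ≤
      2 / b * ((1 - r₁) ^ b * (1 - r₁) ^ 2) := by
  have hπ := Real.pi_pos
  have hr : 0 < 1 - r₁ := by linarith
  rw [integral_complex_ofReal, Complex.norm_real]
  calc |∫ w in polarRect r₁ r₂ φ₁ φ₂, fEx b b w ∂dA|
      ≤ (φ₂ - φ₁) / Real.pi * (2 / b * (1 - r₁) ^ (b + 1)) :=
        abs_setIntegral_fEx_polarRect_le hb hr₁ h₁₂ hr₂ hφ₁₂ (by nlinarith)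
    _ ≤ (1 - r₁) * (2 / b * (1 - r₁) ^ (b + 1)) := by
        gcongr
        rw [div_le_iff₀' hπ]
        linarith
    _ = 2 / b * ((1 - r₁) ^ b * (1 - r₁) ^ 2) := by
        rw [Real.rpow_add_one hr.ne']
        ring

theorem wQuot_fEx_le (hb : 0 < b) (hz : 1 / 2 ≤ ‖z‖) (hz₁ : ‖z‖ < 1)
    (hζ : ζ ∈ Bz z) : wQuot (fun w => (fEx b b w : ℂ)) z ζ ≤ 32 / b * (1 - ‖z‖) ^ b := by
  have hz_pos : 0 < ‖z‖ := by linarith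
  obtain ⟨hnorm, hnorm'⟩ := norm_mem_Icc_of_mem_Bz hζ
  obtain ⟨hangle, hangle'⟩ := angFrom_mem_Icc_of_mem_Bz hz_pos hζ
  have hBzz : ‖∫ w in Bzz z ζ, (fEx b b w : ℂ) ∂dA‖ ≤ 2 / b * ((1 - ‖z‖) ^ b * (1 - ‖z‖) ^ 2) :=
    norm_setIntegral_fEx_polarRect_le hb hz hnorm (by linarith) hangle hangle'
  have hBz : ‖∫ w in Bz z, (fEx b b w : ℂ) ∂dA‖ ≤ 2 / b * ((1 - ‖z‖) ^ b * (1 - ‖z‖) ^ 2) :=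
    norm_setIntegral_fEx_polarRect_le hb hz (by linarith) (by linarith)
      (by nlinarith [Real.pi_pos]) le_rfl
  calc wQuot (fun w => (fEx b b w : ℂ)) z ζ
      ≤ (‖∫ w in Bzz z ζ, (fEx b b w : ℂ) ∂dA‖ + ‖∫ w in Bz z, (fEx b b w : ℂ) ∂dA‖) /
          dA.real (Bz z) :=
        wQuot_le hz_pos hζ (integrableOn_fEx b (isCompact_polarRect ..).isBounded).ofReal
    _ ≤ 32 / b * (1 - ‖z‖) ^ b := by
        rw [dA_real_Bz hz_pos hz₁, div_le_iff₀ (by have := sub_pos.2 hz₁; positivity)]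
        calc _ ≤ 2 * (2 / b * ((1 - ‖z‖) ^ b * (1 - ‖z‖) ^ 2)) := by linarith
          _ = 32 / b * (1 - ‖z‖) ^ b * ((1 - ‖z‖) ^ 2 * 1 / 8) := by ring
          _ ≤ 32 / b * (1 - ‖z‖) ^ b * ((1 - ‖z‖) ^ 2 * (1 + 3 * ‖z‖) / 8) := by
              gcongr
              linarith

theorem isVWMO_fEx (hb : 0 < b) : IsVWMO (fun z => (fEx b b z : ℂ)) := by
  have hg := (tendsto_one_sub_rpow hb).const_mul (32 / b)
  rw [mul_zero] at hg
  exact isVWMO_of_tendsto one_half_lt_one hg fun z hz hr ζ hζ => wQuot_fEx_le hb hr hz hζ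

end WeakOscillation

section BergmanOscillation

variable {b c : ℝ} {z : ℂ}

theorem one_half_lt_tanh_one : 1 / 2 < Real.tanh 1 := by
  have hexp := Real.exp_one_gt_two
  have hexp_inv : (Real.exp 1)⁻¹ < 1 / 2 := by
    rw [one_div]
    exact inv_strictAnti₀ two_pos hexp
  rw [Real.tanh_eq, Real.exp_neg, div_lt_div_iff₀ two_pos (by positivity)]
  linarith

theorem one_sub_norm_mul_norm_le (w z : ℂ) : 1 - ‖w‖ * ‖z‖ ≤ ‖1 - (starRingEnd ℂ) w * z‖ := by
  simpa using norm_sub_norm_le 1 ((starRingEnd ℂ) w * z)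

theorem norm_one_sub_conj_mul_le (hz : ‖z‖ ≤ 1) (w : ℂ) :
    ‖1 - (starRingEnd ℂ) w * z‖ ≤ 2 * (1 - ‖z‖) + ‖z - w‖ := by
  have hsplit : 1 - (starRingEnd ℂ) w * z =
      ((1 - ‖z‖ ^ 2 : ℝ) : ℂ) + (starRingEnd ℂ) (z - w) * z := by
    push_cast
    rw [← Complex.conj_mul' z, map_sub]
    ring
  calc ‖1 - (starRingEnd ℂ) w * z‖ ≤ (1 - ‖z‖ ^ 2) + ‖z - w‖ * ‖z‖ := by
        rw [hsplit]
        refine (norm_add_le _ _).trans_eq ?_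
        rw [norm_mul, RCLike.norm_conj,
          Complex.norm_of_nonneg (sub_nonneg.2 (pow_le_one₀ (norm_nonneg z) hz))]
    _ ≤ 2 * (1 - ‖z‖) + ‖z - w‖ := by
        nlinarith [mul_le_of_le_one_right (norm_nonneg (z - w)) hz]

theorem mem_Dball_iff {w : ℂ} (hz : ‖z‖ ≤ 1) :
    w ∈ Dball z ↔ ‖w‖ < 1 ∧ ‖z - w‖ < Real.tanh 1 * ‖1 - (starRingEnd ℂ) w * z‖ := by
  refine and_congr_right fun hw => ?_
  have hpos : 0 < ‖1 - (starRingEnd ℂ) w * z‖ := by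
    nlinarith [one_sub_norm_mul_norm_le w z, mul_le_of_le_one_right (norm_nonneg w) hz]
  rw [norm_div, div_lt_iff₀ hpos]

theorem closedBall_subset_Dball (hz : ‖z‖ < 1) :
    Metric.closedBall z ((1 - ‖z‖) / 2) ⊆ Dball z := by
  intro w hw
  rw [mem_closedBall_iff_norm'] at hw
  have hw_norm : ‖w‖ ≤ ‖z‖ + (1 - ‖z‖) / 2 := by
    linarith [norm_sub_norm_le w z, norm_sub_rev w z]
  have hden : 1 - ‖z‖ ≤ ‖1 - (starRingEnd ℂ) w * z‖ := by
    nlinarith [one_sub_norm_mul_norm_le w z, norm_nonneg z, norm_nonneg w]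
  rw [mem_Dball_iff hz.le]
  exact ⟨by linarith, by nlinarith [one_half_lt_tanh_one]⟩

theorem Dball_subset_ball (hz : ‖z‖ < 1) :
    Dball z ⊆ Metric.ball z (2 / (1 - Real.tanh 1) * (1 - ‖z‖)) := by
  intro w hw
  have htanh := Real.tanh_lt_one 1
  have hden := norm_one_sub_conj_mul_le hz.le w
  rw [mem_Dball_iff hz.le] at hw
  rw [mem_ball_iff_norm', div_mul_eq_mul_div, lt_div_iff₀ (sub_pos.2 htanh)]
  nlinarith [hw.2, one_half_lt_tanh_one]

theorem isBounded_Dball (z : ℂ) : Bornology.IsBounded (Dball z) :=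
  Metric.isBounded_ball.subset fun _ hw => mem_ball_zero_iff.2 hw.1

theorem dA_real_Dball_le (hz : ‖z‖ < 1) :
    dA.real (Dball z) ≤ (2 / (1 - Real.tanh 1) * (1 - ‖z‖)) ^ 2 := by
  have hradius : 0 ≤ 2 / (1 - Real.tanh 1) * (1 - ‖z‖) :=
    mul_nonneg (div_nonneg zero_le_two (sub_pos.2 (Real.tanh_lt_one 1)).le) (sub_pos.2 hz).le
  rw [← dA_real_ball z hradius]
  exact measureReal_mono (Dball_subset_ball hz) Metric.isBounded_ball.measure_lt_top.ne

theorem dA_real_Dball_pos (hz : ‖z‖ < 1) : 0 < dA.real (Dball z) := by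
  have hradius : 0 < (1 - ‖z‖) / 2 := half_pos (sub_pos.2 hz)
  calc 0 < dA.real (Metric.ball z ((1 - ‖z‖) / 2)) := by
        rw [dA_real_ball z hradius.le]
        positivity
    _ ≤ dA.real (Dball z) :=
        measureReal_mono (Metric.ball_subset_closedBall.trans (closedBall_subset_Dball hz))
          (isBounded_Dball z).measure_lt_top.ne

theorem abs_avg1_le {f : ℂ → ℝ} {M : ℝ} (hM : ∀ w, |f w| ≤ M) (z : ℂ) : |avg1 f z| ≤ M := by
  have hM_nonneg : 0 ≤ M := (abs_nonneg (f z)).trans (hM z)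
  rw [avg1, ← Measure.real, abs_mul, abs_of_nonneg (inv_nonneg.2 measureReal_nonneg),
    inv_mul_eq_div]
  exact div_le_of_le_mul₀ measureReal_nonneg hM_nonneg
    (norm_setIntegral_le_of_norm_le_const (f := f) (isBounded_Dball z).measure_lt_top
      fun w _ => hM w)

-- Integrate the pointwise bound `f² - c f = f (f - c) ≤ M |f - c|`.
theorem integral_sq_sub_le_mul_integral_abs_sub {α : Type*} [MeasurableSpace α] {μ : Measure α}
    [IsFiniteMeasure μ] {f : α → ℝ} {M c : ℝ} (hf : Integrable f μ) (hfM : ∀ x, |f x| ≤ M)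
    (hcM : |c| ≤ M) :
    ∫ x, f x ^ 2 ∂μ - M * |∫ x, f x ∂μ| ≤ M * ∫ x, |f x - c| ∂μ := by
  have hf_sq : Integrable (fun x => f x ^ 2) μ := by
    simpa only [sq] using hf.bdd_mul hf.aestronglyMeasurable (.of_forall hfM)
  have habs : Integrable (fun x => |f x - c|) μ := (hf.sub (integrable_const c)).abs
  have hpointwise : ∀ x, f x ^ 2 - c * f x ≤ M * |f x - c| := fun x =>
    calc f x ^ 2 - c * f x = f x * (f x - c) := by ring
      _ ≤ |f x| * |f x - c| := (le_abs_self _).trans_eq (abs_mul _ _)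
      _ ≤ M * |f x - c| := mul_le_mul_of_nonneg_right (hfM x) (abs_nonneg _)
  have hmean : c * ∫ x, f x ∂μ ≤ M * |∫ x, f x ∂μ| :=
    ((le_abs_self _).trans_eq (abs_mul _ _)).trans (mul_le_mul_of_nonneg_right hcM (abs_nonneg _))
  calc ∫ x, f x ^ 2 ∂μ - M * |∫ x, f x ∂μ| ≤ ∫ x, f x ^ 2 ∂μ - c * ∫ x, f x ∂μ :=
        sub_le_sub_left hmean _
    _ = ∫ x, (f x ^ 2 - c * f x) ∂μ := by
        rw [integral_sub hf_sq (hf.const_mul c), integral_const_mul]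
    _ ≤ ∫ x, M * |f x - c| ∂μ :=
        integral_mono (hf_sq.sub (hf.const_mul c)) (habs.const_mul M) hpointwise
    _ = M * ∫ x, |f x - c| ∂μ := integral_const_mul _ _

theorem setIntegral_abs_fEx_sub_polarRect_ge {r₁ r₂ φ₁ φ₂ : ℝ} (hb : 0 < b) (hc : |c| ≤ 2)
    (hr₁ : 1 / 2 ≤ r₁) (h₁₂ : r₁ ≤ r₂) (hr₂ : r₂ < 1) (hφ₁₂ : φ₁ ≤ φ₂)
    (hφ : φ₂ - φ₁ < 2 * Real.pi) :
    (φ₂ - φ₁) / Real.pi * ((r₂ - r₁) / 4 - 9 / (4 * b) * (1 - r₁) ^ (b + 1)) ≤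
      ∫ w in polarRect r₁ r₂ φ₁ φ₂, |fEx b b w - c| ∂dA := by
  have hcompact := isCompact_polarRect r₁ r₂ φ₁ φ₂
  have : IsFiniteMeasure (dA.restrict (polarRect r₁ r₂ φ₁ φ₂)) :=
    isFiniteMeasure_restrict.2 hcompact.measure_lt_top.ne
  have hdeviation := integral_sq_sub_le_mul_integral_abs_sub
    (integrableOn_fEx b hcompact.isBounded) (abs_fEx_le_two b) hc
  have hsq := setIntegral_sq_fEx_polarRect_ge hb hr₁ h₁₂ hr₂ hφ₁₂ hφ
  have hmean := abs_setIntegral_fEx_polarRect_le hb hr₁ h₁₂ hr₂ hφ₁₂ hφ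
  calc (φ₂ - φ₁) / Real.pi * ((r₂ - r₁) / 4 - 9 / (4 * b) * (1 - r₁) ^ (b + 1))
      = ((φ₂ - φ₁) / Real.pi * ((r₂ - r₁) / 2 - (1 - r₁) ^ (b + 1) / (2 * b)) -
          2 * ((φ₂ - φ₁) / Real.pi * (2 / b * (1 - r₁) ^ (b + 1)))) / 2 := by
        field_simp
        ring
    _ ≤ ∫ w in polarRect r₁ r₂ φ₁ φ₂, |fEx b b w - c| ∂dA := by linarith

theorem polarRect_arg_subset_Dball (hz : ‖z‖ < 1) :
    polarRect ‖z‖ (‖z‖ + (1 - ‖z‖) / 4) z.arg (z.arg + (1 - ‖z‖) / 4) ⊆ Dball z := by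
  refine (polarRect_subset_closedBall (norm_nonneg z)).trans ?_
  rw [Complex.norm_mul_exp_arg_mul_I]
  refine (Metric.closedBall_subset_closedBall ?_).trans (closedBall_subset_Dball hz)
  nlinarith [norm_nonneg z]

-- The bound `b / 72` makes the error term at most half of the main term `(1 - ‖z‖) / 16`.
theorem setIntegral_abs_fEx_sub_Dball_ge (hb : 0 < b) (hc : |c| ≤ 2)
    (hz : 1 / 2 ≤ ‖z‖) (hz₁ : ‖z‖ < 1) (hbz : (1 - ‖z‖) ^ b ≤ b / 72) :
    (1 - ‖z‖) ^ 2 / (128 * Real.pi) ≤ ∫ w in Dball z, |fEx b b w - c| ∂dA := by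
  have hr : 0 < 1 - ‖z‖ := sub_pos.2 hz₁
  have hintegrable : IntegrableOn (fun w => |fEx b b w - c|) (Dball z) dA :=
    ((integrableOn_fEx b (isBounded_Dball z)).sub
      (integrableOn_const (isBounded_Dball z).measure_lt_top.ne)).abs
  calc (1 - ‖z‖) ^ 2 / (128 * Real.pi)
      = (1 - ‖z‖) / 4 / Real.pi *
          ((1 - ‖z‖) / 4 / 4 - 9 / (4 * b) * (b / 72 * (1 - ‖z‖))) := by
        field_simp
        ring
    _ ≤ (1 - ‖z‖) / 4 / Real.pi *
          ((1 - ‖z‖) / 4 / 4 - 9 / (4 * b) * (1 - ‖z‖) ^ (b + 1)) := by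
        rw [Real.rpow_add_one hr.ne']
        gcongr
    _ ≤ ∫ w in polarRect ‖z‖ (‖z‖ + (1 - ‖z‖) / 4) z.arg (z.arg + (1 - ‖z‖) / 4),
          |fEx b b w - c| ∂dA := by
        simpa only [add_sub_cancel_left] using
          setIntegral_abs_fEx_sub_polarRect_ge hb hc hz (r₂ := ‖z‖ + (1 - ‖z‖) / 4)
            (φ₁ := z.arg) (φ₂ := z.arg + (1 - ‖z‖) / 4) (by linarith) (by linarith) (by linarith)
            (by linarith [Real.pi_gt_three])
    _ ≤ ∫ w in Dball z, |fEx b b w - c| ∂dA :=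
        setIntegral_mono_set hintegrable (.of_forall fun _ => abs_nonneg _)
          (polarRect_arg_subset_Dball hz₁).eventuallyLE

theorem le_meanOsc1_fEx (hb : 0 < b) (hz : 1 / 2 ≤ ‖z‖) (hz₁ : ‖z‖ < 1)
    (hbz : (1 - ‖z‖) ^ b ≤ b / 72) :
    (1 - Real.tanh 1) ^ 2 / (512 * Real.pi) ≤ meanOsc1 (fEx b b) z := by
  have hr : 0 < 1 - ‖z‖ := sub_pos.2 hz₁
  have htanh : 0 < 1 - Real.tanh 1 := sub_pos.2 (Real.tanh_lt_one 1)
  calc (1 - Real.tanh 1) ^ 2 / (512 * Real.pi)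
      = ((2 / (1 - Real.tanh 1) * (1 - ‖z‖)) ^ 2)⁻¹ * ((1 - ‖z‖) ^ 2 / (128 * Real.pi)) := by
        field_simp
        norm_num
    _ ≤ (dA.real (Dball z))⁻¹ * ∫ w in Dball z, |fEx b b w - avg1 (fEx b b) z| ∂dA := by
        gcongr
        · exact dA_real_Dball_pos hz₁
        · exact dA_real_Dball_le hz₁
        · exact setIntegral_abs_fEx_sub_Dball_ge hb (abs_avg1_le (abs_fEx_le_two b) z) hz hz₁ hbz
    _ = meanOsc1 (fEx b b) z := rfl

theorem exists_pos_le_meanOsc1_fEx (hb : 0 < b) :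
    ∃ C > (0 : ℝ), ∃ r₀ ∈ Ioo (0 : ℝ) 1, ∀ z ∈ unitDisc, r₀ ≤ ‖z‖ →
      C ≤ meanOsc1 (fEx b b) z := by
  have htanh : 0 < 1 - Real.tanh 1 := sub_pos.2 (Real.tanh_lt_one 1)
  obtain ⟨r₁, hr₁, hsmall⟩ := mem_nhdsLT_iff_exists_Ico_subset.1
    ((tendsto_one_sub_rpow hb).eventually_le_const (by positivity : 0 < b / 72))
  refine ⟨(1 - Real.tanh 1) ^ 2 / (512 * Real.pi), by positivity, max (1 / 2) r₁,
    ⟨lt_max_of_lt_left one_half_pos, max_lt one_half_lt_one hr₁⟩, fun z hz hr => ?_⟩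
  exact le_meanOsc1_fEx hb ((le_max_left _ _).trans hr) hz
    (hsmall ⟨(le_max_right _ _).trans hr, hz⟩)

end BergmanOscillation

/-- For `b = β > 0`, the example symbol `f = fEx b b`
(`f(re^{iθ}) = (1/r) sin(1/(1-r)^b)` for `r ≥ 1/2`) is bounded on `𝔻` and satisfies the
VWMO condition, but does not belong to `VMO¹`: there are `C > 0` and `r₀ ∈ (0,1)` with
`(1/|D(z,1)|) ∫_{D(z,1)} |f(ξ) - f̂₁(z)| dA(ξ) ≥ C` for all `z ∈ 𝔻` with `|z| ≥ r₀`. -/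
theorem example_bounded_vwmo_not_vmo (b : ℝ) (hb : 0 < b) :
    (∃ M : ℝ, ∀ z ∈ unitDisc, |fEx b b z| ≤ M) ∧
    IsVWMO (fun z => (fEx b b z : ℂ)) ∧
    ∃ C > (0:ℝ), ∃ r₀ ∈ Set.Ioo (0:ℝ) 1, ∀ z ∈ unitDisc, r₀ ≤ ‖z‖ →
      C ≤ meanOsc1 (fEx b b) z :=
  ⟨⟨2, fun z _ => abs_fEx_le_two b z⟩, isVWMO_fEx hb, exists_pos_le_meanOsc1_fEx hb⟩
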